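/- Let n ≥ 1, let ψ : T_B → T_B be a biholomorphism (a holomorphic bijection of T_B onto itself with holomorphic inverse), and let g : T_B → ℂ be twice continuously differentiable (as a function of the underlying real variables). Then Δ̃(g∘ψ)(z) = (Δ̃g)(ψ(z)) for all z ∈ T_B, where Δ̃ is the invariant Laplacian defined by Δ̃g(z) = 8ρ(z)[ Σ_{j=1}^{n−1} ∂²g/∂z_j∂z̄_j(z) + Σ_{j=1}^{n−1} 2y_j ∂²g/∂z_n∂z̄_j(z) + Σ_{j=1}^{n−1} 2y_j ∂²g/∂z̄_n∂z_j(z) + 2(y_n + |y'|²) ∂²g/∂z̄_n∂z_n(z) ]. -/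

import Mathlib

open MeasureTheory Complex ComplexConjugate

noncomputable section

/-- The tube domain `T_B ⊆ ℂ^(n+1)` (paper dimension `n+1 ≥ 1`). -/
def TB (n : ℕ) : Set (Fin (n + 1) → ℂ) :=
  {z | ∑ k : Fin n, (z k.castSucc).im ^ 2 < (z (Fin.last n)).im}

/-- `ρ(z) = y_n − |y'|²`. -/
def rho (n : ℕ) (z : Fin (n + 1) → ℂ) : ℝ :=
  (z (Fin.last n)).im - ∑ k : Fin n, (z k.castSucc).im ^ 2

/-- `ρ(z,w) = (1/4)(Σ (z_k − conj w_k)² − 2i(z_n − conj w_n))`. -/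
def rho2 (n : ℕ) (z w : Fin (n + 1) → ℂ) : ℂ :=
  (1 / 4) * ((∑ k : Fin n, (z k.castSucc - conj (w k.castSucc)) ^ 2)
    - 2 * Complex.I * (z (Fin.last n) - conj (w (Fin.last n))))

/-- The point `𝐢 = (0,…,0,i) ∈ T_B`. -/
def iPt (n : ℕ) : Fin (n + 1) → ℂ := fun j => if j = Fin.last n then Complex.I else 0

/-- `c_α = Γ(n+1+α)/(2^(n+1) πⁿ Γ(α+1))` (paper `n` = `n+1` here). -/
def cA (n : ℕ) (α : ℝ) : ℝ :=
  Real.Gamma ((n : ℝ) + 2 + α) / (2 ^ (n + 2) * Real.pi ^ (n + 1) * Real.Gamma (α + 1))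

/-- Wirtinger derivative `∂g/∂z_j = (1/2)(∂g/∂x_j − i ∂g/∂y_j)`. -/
def wdz (n : ℕ) (j : Fin (n + 1)) (g : (Fin (n + 1) → ℂ) → ℂ) : (Fin (n + 1) → ℂ) → ℂ :=
  fun z => (1 / 2) * (fderiv ℝ g z (Pi.single j 1) - Complex.I * fderiv ℝ g z (Pi.single j Complex.I))

/-- Wirtinger derivative `∂g/∂z̄_j = (1/2)(∂g/∂x_j + i ∂g/∂y_j)`. -/
def wdzbar (n : ℕ) (j : Fin (n + 1)) (g : (Fin (n + 1) → ℂ) → ℂ) : (Fin (n + 1) → ℂ) → ℂ :=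
  fun z => (1 / 2) * (fderiv ℝ g z (Pi.single j 1) + Complex.I * fderiv ℝ g z (Pi.single j Complex.I))

/-- The invariant Laplacian `Δ̃` on `T_B`. -/
def invLap (n : ℕ) (g : (Fin (n + 1) → ℂ) → ℂ) (z : Fin (n + 1) → ℂ) : ℂ :=
  8 * ((rho n z : ℝ) : ℂ) *
    ((∑ j : Fin n, wdz n j.castSucc (wdzbar n j.castSucc g) z)
      + (∑ j : Fin n, 2 * ((z j.castSucc).im : ℂ) * wdz n (Fin.last n) (wdzbar n j.castSucc g) z)
      + (∑ j : Fin n, 2 * ((z j.castSucc).im : ℂ) * wdzbar n (Fin.last n) (wdz n j.castSucc g) z)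
      + 2 * ((((z (Fin.last n)).im + ∑ j : Fin n, (z j.castSucc).im ^ 2 : ℝ)) : ℂ)
          * wdzbar n (Fin.last n) (wdz n (Fin.last n) g) z)


open Metric Set

/-- frame matrix -/
def frM (n : ℕ) (q : Fin (n + 1) → ℂ) : Matrix (Fin (n + 1)) (Fin (n + 1)) ℂ :=
  Matrix.of fun j a =>
    Fin.lastCases (motive := fun _ => ℂ)
      (Fin.lastCases (motive := fun _ => ℂ) (2 * (rho n q : ℂ))
        (fun k => 2 * (Real.sqrt (2 * rho n q) : ℂ) * ((q k.castSucc).im : ℂ)) a)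
      (fun l => Fin.lastCases (motive := fun _ => ℂ) 0
        (fun k => if l = k then (Real.sqrt (2 * rho n q) : ℂ) else 0) a) j

theorem frM_ll (n : ℕ) (q) : frM n q (Fin.last n) (Fin.last n) = 2 * (rho n q : ℂ) := by
  simp [frM]
theorem frM_lc (n : ℕ) (q) (k : Fin n) : frM n q (Fin.last n) k.castSucc =
    2 * (Real.sqrt (2 * rho n q) : ℂ) * ((q k.castSucc).im : ℂ) := by
  simp [frM]
theorem frM_cl (n : ℕ) (q) (k : Fin n) : frM n q k.castSucc (Fin.last n) = 0 := by
  simp [frM]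
theorem frM_cc (n : ℕ) (q) (l k : Fin n) : frM n q l.castSucc k.castSucc =
    if l = k then (Real.sqrt (2 * rho n q) : ℂ) else 0 := by
  simp [frM]

theorem frM_mulVec_c (n : ℕ) (q a) (k : Fin n) : (frM n q).mulVec a k.castSucc =
    (Real.sqrt (2 * rho n q) : ℂ) * a k.castSucc := by
  simp [Matrix.mulVec, dotProduct, Fin.sum_univ_castSucc, frM_cl, frM_cc]

theorem frM_mulVec_l (n : ℕ) (q a) : (frM n q).mulVec a (Fin.last n) =
    (∑ k : Fin n, 2 * (Real.sqrt (2 * rho n q) : ℂ) * ((q k.castSucc).im : ℂ) * a k.castSucc) +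
    2 * (rho n q : ℂ) * a (Fin.last n) := by
  simp [Matrix.mulVec, dotProduct, Fin.sum_univ_castSucc, frM_ll, frM_lc]

theorem rho_pos {n : ℕ} {q} (hq : q ∈ TB n) : 0 < rho n q := by
  simp only [TB, mem_ofPred_eq] at hq
  simp only [rho]; linarith

theorem frM_isUnit {n : ℕ} {q} (hq : q ∈ TB n) : IsUnit (frM n q) := by
  rw [← Matrix.mulVec_injective_iff_isUnit]
  have hr := rho_pos hq
  have hr' : (rho n q : ℂ) ≠ 0 := by exact_mod_cast hr.ne'
  have hs : (Real.sqrt (2 * rho n q) : ℂ) ≠ 0 := by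
    have : 0 < Real.sqrt (2 * rho n q) := Real.sqrt_pos.2 (by linarith)
    exact_mod_cast this.ne'
  intro a b hab
  have hc : ∀ k : Fin n, a k.castSucc = b k.castSucc := by
    intro k
    have := congrFun hab k.castSucc
    simp only [frM_mulVec_c] at this
    exact mul_left_cancel₀ hs this
  funext j
  refine Fin.lastCases ?_ hc j
  have := congrFun hab (Fin.last n)
  simp only [frM_mulVec_l, hc] at this
  have := add_left_cancel this
  exact mul_left_cancel₀ (mul_ne_zero two_ne_zero hr') this

/-- The normalized tube. -/
def Snorm (n : ℕ) : Set (Fin (n + 1) → ℂ) :=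
  {a | 2 * ∑ k : Fin n, (a k.castSucc).im ^ 2 < 1 + 2 * (a (Fin.last n)).im}

theorem mem_TB_frM {n : ℕ} {q} (hq : q ∈ TB n) (a : Fin (n + 1) → ℂ) :
    q + (frM n q).mulVec a ∈ TB n ↔ a ∈ Snorm n := by
  have hr := rho_pos hq
  have hs : Real.sqrt (2 * rho n q) ^ 2 = 2 * rho n q := Real.sq_sqrt (by linarith)
  simp only [TB, Snorm, mem_ofPred_eq, Pi.add_apply, frM_mulVec_c, frM_mulVec_l]
  set s := Real.sqrt (2 * rho n q) with hsdef
  have e1 : ∀ k : Fin n, (q k.castSucc + (s : ℂ) * a k.castSucc).im =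
      (q k.castSucc).im + s * (a k.castSucc).im := by intro k; simp
  have e2 : (q (Fin.last n) + (∑ k : Fin n, 2 * (s : ℂ) * ((q k.castSucc).im : ℂ) * a k.castSucc +
      2 * (rho n q : ℂ) * a (Fin.last n))).im =
      (q (Fin.last n)).im + ((∑ k : Fin n, 2 * s * (q k.castSucc).im * (a k.castSucc).im) +
        2 * rho n q * (a (Fin.last n)).im) := by
    simp [Complex.im_sum]
  rw [e2]
  simp only [e1]
  have e3 : ∑ k : Fin n, ((q k.castSucc).im + s * (a k.castSucc).im) ^ 2 =
      ∑ k : Fin n, (q k.castSucc).im ^ 2 +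
      ∑ k : Fin n, 2 * s * (q k.castSucc).im * (a k.castSucc).im +
      2 * rho n q * ∑ k : Fin n, (a k.castSucc).im ^ 2 := by
    rw [← hs, Finset.mul_sum, ← Finset.sum_add_distrib, ← Finset.sum_add_distrib]
    exact Finset.sum_congr rfl fun k _ => by ring
  rw [e3]
  have e4 : (q (Fin.last n)).im = rho n q + ∑ k : Fin n, (q k.castSucc).im ^ 2 := by
    simp [rho]
  rw [e4]
  constructor
  · intro h
    have : rho n q * (2 * ∑ k : Fin n, (a k.castSucc).im ^ 2) <
      rho n q * (1 + 2 * (a (Fin.last n)).im) := by linarith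
    exact lt_of_mul_lt_mul_left this hr.le
  · intro h
    have := mul_lt_mul_of_pos_left h hr
    linarith

/-- shear -/
def shr (n : ℕ) (c : ℂ) (a : Fin (n + 1) → ℂ) : Fin (n + 1) → ℂ :=
  a + (c * ∑ k : Fin n, a k.castSucc * a k.castSucc) • (Pi.single (Fin.last n) 1)

/-- projective dilation -/
def dil (n : ℕ) (c : ℂ) (a : Fin (n + 1) → ℂ) : Fin (n + 1) → ℂ :=
  (1 + c * a (Fin.last n))⁻¹ • a

theorem shr_diff (n c) : Differentiable ℂ (shr n c) := by
  unfold shr; fun_prop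

theorem dil_diff (n : ℕ) (c : ℂ) (a : Fin (n + 1) → ℂ) (h : 1 + c * a (Fin.last n) ≠ 0) :
    DifferentiableAt ℂ (dil n c) a := by
  unfold dil
  have : DifferentiableAt ℂ (fun a : Fin (n + 1) → ℂ => 1 + c * a (Fin.last n)) a := by fun_prop
  exact (this.inv h).smul differentiableAt_id

theorem shr_zero (n c) : shr n c 0 = 0 := by simp [shr]
theorem dil_zero (n c) : dil n c 0 = 0 := by simp [dil]

theorem shr_fderiv (n : ℕ) (c : ℂ) :
    HasFDerivAt (shr n c) (ContinuousLinearMap.id ℂ (Fin (n + 1) → ℂ)) 0 := by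
  have h1 : ∀ k : Fin n, HasFDerivAt (fun a : Fin (n + 1) → ℂ => a k.castSucc * a k.castSucc)
      (0 : (Fin (n + 1) → ℂ) →L[ℂ] ℂ) 0 := by
    intro k
    have h := (hasFDerivAt_apply (𝕜 := ℂ) k.castSucc (0 : Fin (n + 1) → ℂ))
    exact (h.mul h).congr_fderiv (by ext; simp)
  have h2 := (HasFDerivAt.fun_sum (u := Finset.univ) fun k _ => h1 k).const_mul c
  have h3 := (hasFDerivAt_id (𝕜 := ℂ) (0 : Fin (n + 1) → ℂ)).add
    (h2.smul_const (Pi.single (Fin.last n) (1 : ℂ) : Fin (n + 1) → ℂ))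
  simp only [Finset.sum_const_zero, smul_zero] at h3
  exact h3.congr_fderiv (by ext; simp)

theorem dil_fderiv (n : ℕ) (c : ℂ) :
    HasFDerivAt (dil n c) (ContinuousLinearMap.id ℂ (Fin (n + 1) → ℂ)) 0 := by
  have h1 : DifferentiableAt ℂ (fun a : Fin (n + 1) → ℂ => (1 + c * a (Fin.last n))⁻¹) 0 := by
    have : DifferentiableAt ℂ (fun a : Fin (n + 1) → ℂ => 1 + c * a (Fin.last n)) 0 := by fun_prop
    exact this.inv (by simp)
  have h3 := h1.hasFDerivAt.smul (hasFDerivAt_id (𝕜 := ℂ) (0 : Fin (n + 1) → ℂ))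
  exact h3.congr_fderiv (by ext; simp)

theorem norm_lt_one_iff' (n : ℕ) (u : EuclideanSpace ℂ (Fin (n + 1))) :
    ‖u‖ < 1 ↔ ∑ k : Fin n, normSq (u k.castSucc) + normSq (u (Fin.last n)) < 1 := by
  rw [← sq_lt_one_iff₀ (norm_nonneg _), EuclideanSpace.norm_sq_eq, Fin.sum_univ_castSucc]
  simp only [normSq_eq_norm_sq]

/-- Siegel -/
def Sieg (n : ℕ) : Set (Fin (n + 1) → ℂ) :=
  {a | ∑ k : Fin n, normSq (a k.castSucc) < 1 + 2 * (a (Fin.last n)).im}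

theorem one_add_I_ne {w : ℂ} (h : normSq w < 1) : 1 + I * w ≠ 0 := by
  intro h0
  have h1 : I * w = -1 := by linear_combination h0
  have := congrArg normSq h1
  simp at this
  linarith

theorem dil_ball {n : ℕ} {u : Fin (n + 1) → ℂ}
    (hu : ∑ k : Fin n, normSq (u k.castSucc) + normSq (u (Fin.last n)) < 1) :
    1 + I * u (Fin.last n) ≠ 0 ∧ dil n I u ∈ Sieg n := by
  have h1 : normSq (u (Fin.last n)) < 1 := by
    have : 0 ≤ ∑ k : Fin n, normSq (u k.castSucc) := Finset.sum_nonneg fun k _ => normSq_nonneg _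
    linarith
  have hd := one_add_I_ne h1
  refine ⟨hd, ?_⟩
  have hd' := normSq_pos.2 hd
  simp only [Sieg, dil, mem_ofPred_eq, Pi.smul_apply, smul_eq_mul, normSq_mul, normSq_inv,
    ← Finset.mul_sum]
  set d := 1 + I * u (Fin.last n) with hdd
  have e : (d⁻¹ * u (Fin.last n)).im = (normSq d)⁻¹ *
      ((u (Fin.last n)).im - normSq (u (Fin.last n))) := by
    rw [Complex.inv_def]
    simp [hdd, normSq_apply]
    ring
  rw [e]
  have e2 : normSq d = 1 - 2 * (u (Fin.last n)).im + normSq (u (Fin.last n)) := by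
    simp [hdd, normSq_apply]; ring
  rw [inv_mul_eq_div, inv_mul_eq_div, div_lt_iff₀ hd']
  have : (1 + 2 * (((u (Fin.last n)).im - normSq (u (Fin.last n))) / normSq d)) * normSq d =
    normSq d + 2 * ((u (Fin.last n)).im - normSq (u (Fin.last n))) := by
    field_simp
  rw [this, e2]
  linarith

theorem dil_Sieg {n : ℕ} {a : Fin (n + 1) → ℂ} (ha : a ∈ Sieg n) :
    1 + (-I) * a (Fin.last n) ≠ 0 ∧
    ∑ k : Fin n, normSq (dil n (-I) a k.castSucc) + normSq (dil n (-I) a (Fin.last n)) < 1 := by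
  simp only [Sieg, mem_ofPred_eq] at ha
  set D := 1 + (-I) * a (Fin.last n) with hD
  have e2 : normSq D = 1 + 2 * (a (Fin.last n)).im + normSq (a (Fin.last n)) := by
    simp [hD, normSq_apply]; ring
  have h0 : 0 ≤ ∑ k : Fin n, normSq (a k.castSucc) := Finset.sum_nonneg fun k _ => normSq_nonneg _
  have hpos : 0 < normSq D := by rw [e2]; linarith [normSq_nonneg (a (Fin.last n))]
  refine ⟨normSq_pos.1 hpos, ?_⟩
  simp only [dil, Pi.smul_apply, smul_eq_mul, normSq_mul, normSq_inv, ← Finset.mul_sum]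
  rw [← hD, ← mul_add, inv_mul_eq_div, div_lt_one hpos, e2]
  linarith

theorem shr_im (n : ℕ) (a : Fin (n + 1) → ℂ) (t : ℝ) : (shr n (t * I) a (Fin.last n)).im =
    (a (Fin.last n)).im + t * ∑ k : Fin n, (normSq (a k.castSucc) - 2 * (a k.castSucc).im ^ 2) := by
  simp [shr, normSq_apply, Complex.re_sum]
  left
  rw [← Finset.sum_sub_distrib, ← Finset.sum_sub_distrib]
  refine Finset.sum_congr rfl fun k _ => by ring

theorem shr_c (n : ℕ) (a : Fin (n + 1) → ℂ) (c : ℂ) (k : Fin n) :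
    shr n c a k.castSucc = a k.castSucc := by
  simp [shr]

theorem shr_Sieg {n : ℕ} {a : Fin (n + 1) → ℂ} (ha : a ∈ Sieg n) :
    shr n (((-1/2 : ℝ) : ℂ) * I) a ∈ Snorm n := by
  simp only [Sieg, Snorm, mem_ofPred_eq, shr_im, shr_c, Finset.sum_sub_distrib,
    ← Finset.mul_sum] at *
  linarith

theorem shr_Snorm {n : ℕ} {a : Fin (n + 1) → ℂ} (ha : a ∈ Snorm n) :
    shr n (((1/2 : ℝ) : ℂ) * I) a ∈ Sieg n := by
  simp only [Sieg, Snorm, mem_ofPred_eq, shr_im, shr_c, Finset.sum_sub_distrib,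
    ← Finset.mul_sum] at *
  linarith

theorem TB_isOpen (n : ℕ) : IsOpen (TB n) := by
  unfold TB
  refine isOpen_lt ?_ ?_
  · exact continuous_finsetSum _ fun k _ => by fun_prop
  · fun_prop

theorem contraction {n : ℕ} {ψ : (Fin (n + 1) → ℂ) → (Fin (n + 1) → ℂ)}
    (hψd : DifferentiableOn ℂ ψ (TB n)) (hm : MapsTo ψ (TB n) (TB n)) {p : Fin (n + 1) → ℂ}
    (hp : p ∈ TB n) (u : Fin (n + 1) → ℂ) :
    ‖WithLp.toLp 2 ((frM n (ψ p))⁻¹.mulVec (fderiv ℂ ψ p ((frM n p).mulVec u)))‖ ≤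
      ‖WithLp.toLp 2 u‖ := by
  set q := ψ p with hqdef
  have hq : q ∈ TB n := hm hp
  set A : EuclideanSpace ℂ (Fin (n + 1)) →L[ℂ] (Fin (n + 1) → ℂ) :=
    (EuclideanSpace.equiv (Fin (n + 1)) ℂ).toContinuousLinearMap with hA
  set B : (Fin (n + 1) → ℂ) →L[ℂ] EuclideanSpace ℂ (Fin (n + 1)) :=
    (EuclideanSpace.equiv (Fin (n + 1)) ℂ).symm.toContinuousLinearMap with hB
  set P : (Fin (n + 1) → ℂ) →L[ℂ] (Fin (n + 1) → ℂ) :=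
    LinearMap.toContinuousLinearMap (frM n p).mulVecLin with hP
  set Q : (Fin (n + 1) → ℂ) →L[ℂ] (Fin (n + 1) → ℂ) :=
    LinearMap.toContinuousLinearMap (frM n q)⁻¹.mulVecLin with hQ
  set φ₁ : EuclideanSpace ℂ (Fin (n + 1)) → (Fin (n + 1) → ℂ) :=
    fun u => shr n (((-1/2 : ℝ) : ℂ) * I) (dil n I (A u)) with hφ₁
  set h₁ : (Fin (n + 1) → ℂ) → EuclideanSpace ℂ (Fin (n + 1)) :=
    fun a => B (dil n (-I) (shr n (((1/2 : ℝ) : ℂ) * I) a)) with hh₁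
  set F : EuclideanSpace ℂ (Fin (n + 1)) → EuclideanSpace ℂ (Fin (n + 1)) :=
    fun u => h₁ (Q (ψ (p + P (φ₁ u)) - q)) with hF
  have hφ0 : φ₁ 0 = 0 := by simp [hφ₁, dil_zero, shr_zero]
  have hF0 : F 0 = 0 := by
    simp [hF, hφ0, hh₁, ← hqdef, shr_zero, dil_zero]
  have hball : ∀ u ∈ ball (0 : EuclideanSpace ℂ (Fin (n + 1))) 1,
      DifferentiableAt ℂ φ₁ u ∧ φ₁ u ∈ Snorm n := by
    intro u hu
    rw [mem_ball_zero_iff, norm_lt_one_iff'] at hu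
    have h := dil_ball (u := A u) hu
    refine ⟨?_, shr_Sieg h.2⟩
    have h1 : DifferentiableAt ℂ (fun u => dil n I (A u)) u :=
      (dil_diff n I (A u) h.1).comp u A.differentiableAt
    exact (shr_diff n _ _).comp u h1
  have hSn : ∀ a ∈ Snorm n, DifferentiableAt ℂ h₁ a ∧ ‖h₁ a‖ < 1 := by
    intro a ha
    have h := dil_Sieg (shr_Snorm ha)
    refine ⟨?_, (norm_lt_one_iff' _ _).2 h.2⟩
    exact B.differentiableAt.comp a ((dil_diff n _ _ h.1).comp a (shr_diff n _ _))
  have hT : ∀ a ∈ Snorm n, p + P a ∈ TB n := fun a ha => (mem_TB_frM hp a).2 ha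
  have hT' : ∀ z ∈ TB n, Q (z - q) ∈ Snorm n := by
    intro z hz
    rw [← mem_TB_frM hq]
    convert hz
    simp only [hQ, LinearMap.coe_toContinuousLinearMap', Matrix.mulVecLin_apply, Matrix.mulVec_mulVec]
    rw [Matrix.mul_nonsing_inv _ ((Matrix.isUnit_iff_isUnit_det _).1 (frM_isUnit hq))]
    simp
  have hFd : ∀ u ∈ ball (0 : EuclideanSpace ℂ (Fin (n + 1))) 1, DifferentiableAt ℂ F u := by
    intro u hu
    obtain ⟨h1, h2⟩ := hball u hu
    have h3 : DifferentiableAt ℂ (fun u => p + P (φ₁ u)) u :=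
      (P.differentiableAt.comp u h1).const_add p
    have h4 : DifferentiableAt ℂ ψ (p + P (φ₁ u)) :=
      hψd.differentiableAt ((TB_isOpen n).mem_nhds (hT _ h2))
    have h5 : DifferentiableAt ℂ (fun u => Q (ψ (p + P (φ₁ u)) - q)) u :=
      Q.differentiableAt.comp u ((DifferentiableAt.comp (f := fun u => p + P (φ₁ u)) u h4 h3).sub_const q)
    exact DifferentiableAt.comp (f := fun u => Q (ψ (p + P (φ₁ u)) - q)) u
      (hSn _ (hT' _ (hm (hT _ h2)))).1 h5
  have hnorm : ‖fderiv ℂ F 0‖ ≤ 1 := by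
    refine norm_fderiv_le_one_of_mapsTo_ball (R := 1)
      (fun u hu => (hFd u hu).differentiableWithinAt) ?_ one_pos
    intro u hu
    rw [hF0, mem_closedBall_zero_iff]
    exact (hSn _ (hT' _ (hm (hT _ (hball u hu).2)))).2.le
  have hder : HasFDerivAt F (B.comp (Q.comp ((fderiv ℂ ψ p).comp (P.comp A)))) 0 := by
    have d1 : HasFDerivAt (fun u => dil n I (A u)) A 0 := by
      have := HasFDerivAt.comp (g := dil n I) (f := A) 0
        (by rw [map_zero]; exact dil_fderiv n I) A.hasFDerivAt
      rw [ContinuousLinearMap.id_comp] at this; exact this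
    have d2 : HasFDerivAt φ₁ A 0 := by
      have := HasFDerivAt.comp (g := shr n (((-1/2 : ℝ) : ℂ) * I)) (f := fun u => dil n I (A u)) 0
        (by rw [map_zero, dil_zero]; exact shr_fderiv n _) d1
      rw [ContinuousLinearMap.id_comp] at this; exact this
    have d3 : HasFDerivAt (fun u => p + P (φ₁ u)) (P.comp A) 0 :=
      (P.hasFDerivAt.comp 0 d2).const_add p
    have d4 : HasFDerivAt (fun u => Q (ψ (p + P (φ₁ u)) - q))
        (Q.comp ((fderiv ℂ ψ p).comp (P.comp A))) 0 := by
      refine Q.hasFDerivAt.comp 0 (HasFDerivAt.sub_const q ?_)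
      refine HasFDerivAt.comp (g := ψ) (f := fun u => p + P (φ₁ u)) 0 ?_ d3
      simp only [hφ0, map_zero, add_zero]
      exact (hψd.differentiableAt ((TB_isOpen n).mem_nhds hp)).hasFDerivAt
    have d5 : HasFDerivAt h₁ B 0 := by
      have e1 := HasFDerivAt.comp (g := dil n (-I)) (f := shr n (((1/2 : ℝ) : ℂ) * I)) 0
        (by rw [shr_zero]; exact dil_fderiv n (-I)) (shr_fderiv n _)
      have := B.hasFDerivAt.comp 0 e1
      rw [ContinuousLinearMap.comp_id, ContinuousLinearMap.comp_id] at this; exact this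
    have hz : Q (ψ (p + P (φ₁ 0)) - q) = 0 := by simp [hφ0, ← hqdef]
    refine HasFDerivAt.comp (g := h₁) (f := fun u => Q (ψ (p + P (φ₁ u)) - q)) 0 ?_ d4
    rw [hz]; exact d5
  rw [hder.fderiv] at hnorm
  exact (ContinuousLinearMap.le_of_opNorm_le _ hnorm (WithLp.toLp 2 u)).trans_eq (one_mul _)
theorem smooth_aux {m : ℕ} {U : Set (Fin m → ℂ)} (hU : IsOpen U) {f : (Fin m → ℂ) → ℂ}
    (hf : DifferentiableOn ℂ f U) (v : Fin m → ℂ) {z₀ : Fin m → ℂ} (hz₀ : z₀ ∈ U) :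
    DifferentiableAt ℂ (fun z => fderiv ℂ f z v) z₀ := by
  -- a ball on which `f` is bounded
  obtain ⟨R, hR, hRU, hRb⟩ : ∃ R > 0, ball z₀ (2 * R) ⊆ U ∧
      ∀ w ∈ ball z₀ (2 * R), dist (f w) (f z₀) ≤ 1 := by
    have hc : ContinuousAt f z₀ := (hf.differentiableAt (hU.mem_nhds hz₀)).continuousAt
    have h1 : ∀ᶠ w in nhds z₀, w ∈ U ∧ dist (f w) (f z₀) < 1 :=
      Filter.Eventually.and (hU.mem_nhds hz₀) (Metric.tendsto_nhds.1 hc 1 one_pos)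
    obtain ⟨e, he, h⟩ := Metric.eventually_nhds_iff_ball.1 h1
    refine ⟨e / 2, by positivity, fun w hw => ?_, fun w hw => ?_⟩
    · exact (h w (by simpa [mul_div_cancel₀] using hw)).1
    · exact (h w (by simpa [mul_div_cancel₀] using hw)).2.le
  have hfd : ∀ w ∈ ball z₀ R, ‖fderiv ℂ f w‖ ≤ 2 / R := by
    intro w hw
    have hsub : ball w R ⊆ ball z₀ (2 * R) := by
      apply ball_subset_ball'
      have := mem_ball.1 hw
      linarith
    refine norm_fderiv_le_div_of_mapsTo_ball (hf.mono (hsub.trans hRU)) ?_ hR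
    intro x hx
    rw [mem_closedBall]
    have h1 := hRb x (hsub hx)
    have h2 := hRb w (hsub (mem_ball_self hR))
    have := dist_triangle_right (f x) (f w) (f z₀)
    linarith
  have hsubR : ball z₀ R ⊆ U := (ball_subset_ball (by linarith)).trans hRU
  have hlip : LipschitzOnWith (Real.toNNReal (2 / R)) f (ball z₀ R) := by
    refine (convex_ball z₀ R).lipschitzOnWith_of_nnnorm_fderiv_le (𝕜 := ℂ) ?_ ?_
    · intro x hx
      exact hf.differentiableAt (hU.mem_nhds (hsubR hx))
    · intro x hx
      rw [← NNReal.coe_le_coe, Real.coe_toNNReal _ (by positivity)]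
      exact hfd x hx
  obtain ⟨r, hr, hrv⟩ : ∃ r > 0, r * ‖v‖ < R / 2 := by
    refine ⟨R / 2 / (‖v‖ + 1), by positivity, ?_⟩
    rw [div_mul_eq_mul_div, div_lt_iff₀ (by positivity)]
    nlinarith [norm_nonneg v]
  have hin : ∀ z ∈ ball z₀ (R / 2), ∀ t : ℂ, ‖t‖ ≤ r → z + t • v ∈ ball z₀ R := by
    intro z hz t ht
    rw [mem_ball, dist_eq_norm] at *
    calc ‖z + t • v - z₀‖ = ‖(z - z₀) + t • v‖ := by congr 1; abel
      _ ≤ ‖z - z₀‖ + ‖t • v‖ := norm_add_le _ _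
      _ = ‖z - z₀‖ + ‖t‖ * ‖v‖ := by rw [norm_smul]
      _ ≤ ‖z - z₀‖ + r * ‖v‖ := by gcongr
      _ < R := by linarith
  -- Cauchy formula
  have key : ∀ z ∈ ball z₀ (R / 2), fderiv ℂ f z v =
      (2 * Real.pi * I : ℂ)⁻¹ • ∫ θ in (0:ℝ)..2 * Real.pi,
        (deriv (circleMap 0 r) θ * ((circleMap 0 r θ) ^ 2)⁻¹) * f (z + circleMap 0 r θ • v) := by
    intro z hz
    have hzR : z ∈ ball z₀ R := by simpa using hin z hz 0 (by simpa using hr.le)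
    set V : Set ℂ := (fun t : ℂ => z + t • v) ⁻¹' (ball z₀ R) with hV
    have hVo : IsOpen V := isOpen_ball.preimage (by fun_prop)
    have hd : DifferentiableOn ℂ (fun t : ℂ => f (z + t • v)) V := by
      intro t ht
      refine DifferentiableAt.differentiableWithinAt ?_
      have : DifferentiableAt ℂ f (z + t • v) := hf.differentiableAt (hU.mem_nhds (hsubR ht))
      exact this.comp t (by fun_prop)
    have h1 := cderiv_eq_deriv hVo hd hr (z := 0) (by
      intro t ht
      exact hin z hz t (by simpa using ht))
    have h2 : HasDerivAt (fun t : ℂ => f (z + t • v)) (fderiv ℂ f z v) 0 := by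
      have h3 : HasFDerivAt f (fderiv ℂ f z) (z + (0:ℂ) • v) := by
        simpa using (hf.differentiableAt (hU.mem_nhds (hsubR hzR))).hasFDerivAt
      have h4 : HasDerivAt (fun t : ℂ => z + t • v) v 0 := by
        simpa using ((hasDerivAt_id (0:ℂ)).smul_const v).const_add z
      exact h3.comp_hasDerivAt 0 h4
    rw [← h2.deriv, ← h1, cderiv]
    simp only [circleIntegral, smul_eq_mul, sub_zero, mul_assoc]
  -- differentiate under the integral
  have hcont : ∀ z ∈ ball z₀ (R / 2), Continuous (fun θ : ℝ =>
      (deriv (circleMap 0 r) θ * ((circleMap 0 r θ) ^ 2)⁻¹) * f (z + circleMap 0 r θ • v)) := by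
    intro z hz
    have hc1 : Continuous (fun θ : ℝ => deriv (circleMap 0 r) θ * ((circleMap 0 r θ) ^ 2)⁻¹) := by
      refine Continuous.mul ?_ (Continuous.inv₀ ((continuous_circleMap 0 r).pow 2) ?_)
      · rw [show deriv (circleMap 0 r) = fun θ => circleMap 0 r θ * I from
          funext fun θ => deriv_circleMap 0 r θ]
        exact (continuous_circleMap 0 r).mul continuous_const
      · intro θ
        exact pow_ne_zero _ (circleMap_ne_center hr.ne')
    refine hc1.mul ?_
    have hc2 : ContinuousOn f (ball z₀ R) := (hf.mono hsubR).continuousOn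
    refine hc2.comp_continuous (by have := continuous_circleMap 0 r; fun_prop) ?_
    intro θ
    exact hin z hz _ (by simp [abs_of_pos hr])
  have hz₀' : z₀ ∈ ball z₀ (R / 2) := mem_ball_self (by positivity)
  have : ProperSpace ((Fin m → ℂ) →L[ℂ] ℂ) := FiniteDimensional.proper ℂ _
  have hnorm : ∀ θ : ℝ, ‖deriv (circleMap 0 r) θ * ((circleMap 0 r θ) ^ 2)⁻¹‖ = r⁻¹ := by
    intro θ
    simp [deriv_circleMap, abs_of_pos hr]
    field_simp
  have hmeas : AEStronglyMeasurable (fun θ : ℝ =>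
      (deriv (circleMap 0 r) θ * ((circleMap 0 r θ) ^ 2)⁻¹) •
        fderiv ℂ f (z₀ + circleMap 0 r θ • v)) (volume.restrict (Set.uIoc 0 (2 * Real.pi))) := by
    have hm1 : Measurable (fun θ : ℝ => deriv (circleMap 0 r) θ * ((circleMap 0 r θ) ^ 2)⁻¹) := by
      have := (continuous_circleMap 0 r).measurable
      simp only [deriv_circleMap]
      fun_prop
    have hm2 : Measurable (fun θ : ℝ => fderiv ℂ f (z₀ + circleMap 0 r θ • v)) := by
      refine (measurable_fderiv ℂ f).comp ?_
      have := (continuous_circleMap 0 r)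
      exact Continuous.measurable (by fun_prop)
    exact (hm1.stronglyMeasurable.smul hm2.stronglyMeasurable).aestronglyMeasurable
  have hInt := intervalIntegral.hasFDerivAt_integral_of_dominated_loc_of_lip (𝕜 := ℂ)
    (μ := volume) (a := 0) (b := 2 * Real.pi) (s := ball z₀ (R / 2)) (x₀ := z₀)
    (F := fun z θ => (deriv (circleMap 0 r) θ * ((circleMap 0 r θ) ^ 2)⁻¹) *
      f (z + circleMap 0 r θ • v))
    (F' := fun θ => (deriv (circleMap 0 r) θ * ((circleMap 0 r θ) ^ 2)⁻¹) •
        fderiv ℂ f (z₀ + circleMap 0 r θ • v))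
    (bound := fun _ => r⁻¹ * (2 / R))
    (ball_mem_nhds _ (by positivity))
    (by
      filter_upwards [ball_mem_nhds z₀ (show 0 < R / 2 by positivity)] with z hz
      exact (hcont z hz).aestronglyMeasurable)
    ((hcont z₀ hz₀').intervalIntegrable _ _)
    hmeas
    (by
      refine Filter.Eventually.of_forall fun θ _ => ?_
      refine LipschitzOnWith.of_dist_le_mul fun x hx y hy => ?_
      have h1 := hlip.dist_le_mul _ (hin x hx (circleMap 0 r θ) (by simp [abs_of_pos hr]))
        _ (hin y hy (circleMap 0 r θ) (by simp [abs_of_pos hr]))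
      rw [dist_eq_norm, ← mul_sub, norm_mul, hnorm, ← dist_eq_norm, Real.coe_nnabs,
        abs_of_pos (by positivity), mul_assoc]
      rw [Real.coe_toNNReal _ (by positivity), dist_add_right] at h1
      gcongr)
    intervalIntegrable_const
    (by
      refine Filter.Eventually.of_forall fun θ _ => ?_
      have h1 : HasFDerivAt f (fderiv ℂ f (z₀ + circleMap 0 r θ • v)) (z₀ + circleMap 0 r θ • v) :=
        (hf.differentiableAt (hU.mem_nhds (hsubR (hin z₀ hz₀' _
          (by simp [abs_of_pos hr]))))).hasFDerivAt
      have h2 : HasFDerivAt (fun z => f (z + circleMap 0 r θ • v))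
          (fderiv ℂ f (z₀ + circleMap 0 r θ • v)) z₀ := by
        have h3 := HasFDerivAt.comp (f := fun z => z + circleMap 0 r θ • v) z₀ h1
          ((hasFDerivAt_id z₀).add_const (circleMap 0 r θ • v))
        rw [ContinuousLinearMap.comp_id] at h3
        exact h3
      exact h2.const_mul _)
  have hfin := (hInt.2.differentiableAt).const_smul ((2 * Real.pi * I : ℂ)⁻¹)
  refine hfin.congr_of_eventuallyEq ?_
  filter_upwards [ball_mem_nhds z₀ (show 0 < R / 2 by positivity)] with z hz
  exact key z hz

theorem unitary_part {n : ℕ} {ψ φ : (Fin (n + 1) → ℂ) → (Fin (n + 1) → ℂ)}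
    (hψd : DifferentiableOn ℂ ψ (TB n)) (hφd : DifferentiableOn ℂ φ (TB n))
    (hbij : BijOn ψ (TB n) (TB n)) (hinv : ∀ z ∈ TB n, φ (ψ z) = z)
    {p : Fin (n + 1) → ℂ} (hp : p ∈ TB n) :
    ∃ U : Matrix (Fin (n + 1)) (Fin (n + 1)) ℂ, U * U.conjTranspose = 1 ∧
      LinearMap.toMatrix' (fderiv ℂ ψ p).toLinearMap * frM n p = frM n (ψ p) * U := by
  have hq : ψ p ∈ TB n := hbij.mapsTo hp
  have hφm : MapsTo φ (TB n) (TB n) := by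
    intro w hw
    obtain ⟨z, hz, rfl⟩ := hbij.surjOn hw
    rwa [hinv z hz]
  have hu1 := (Matrix.isUnit_iff_isUnit_det _).1 (frM_isUnit hq)
  have hu2 := (Matrix.isUnit_iff_isUnit_det _).1 (frM_isUnit hp)
  set J := LinearMap.toMatrix' (fderiv ℂ ψ p).toLinearMap with hJ
  have hJv : ∀ v, J.mulVec v = fderiv ℂ ψ p v := by
    intro v
    rw [hJ, LinearMap.toMatrix'_mulVec]; rfl
  set U := (frM n (ψ p))⁻¹ * J * frM n p with hU
  have hJM : J * frM n p = frM n (ψ p) * U := by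
    rw [hU, Matrix.mul_assoc, Matrix.mul_nonsing_inv_cancel_left _ _ hu1]
  have hUv : ∀ v, U.mulVec v = (frM n (ψ p))⁻¹.mulVec (fderiv ℂ ψ p ((frM n p).mulVec v)) := by
    intro v
    rw [← hJv, hU, Matrix.mulVec_mulVec, Matrix.mulVec_mulVec]
  have hD : ∀ v, fderiv ℂ φ (ψ p) (fderiv ℂ ψ p v) = v := by
    intro v
    have h1 : HasFDerivAt (φ ∘ ψ) ((fderiv ℂ φ (ψ p)).comp (fderiv ℂ ψ p)) p :=
      HasFDerivAt.comp p (hφd.differentiableAt ((TB_isOpen n).mem_nhds hq)).hasFDerivAt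
        (hψd.differentiableAt ((TB_isOpen n).mem_nhds hp)).hasFDerivAt
    have h2 : HasFDerivAt (φ ∘ ψ) (ContinuousLinearMap.id ℂ _) p := by
      refine (hasFDerivAt_id p).congr_of_eventuallyEq ?_
      filter_upwards [(TB_isOpen n).mem_nhds hp] with z hz
      exact hinv z hz
    exact congrArg (fun L => L v) (h1.unique h2)
  have hiso : ∀ v, ‖WithLp.toLp 2 (U.mulVec v)‖ = ‖WithLp.toLp 2 v‖ := by
    intro v
    apply le_antisymm
    · rw [hUv]
      exact contraction hψd hbij.mapsTo hp v
    · have h := contraction hφd hφm hq (U.mulVec v)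
      rw [hinv p hp, Matrix.mulVec_mulVec, ← hJM, ← Matrix.mulVec_mulVec, hJv, hD,
        Matrix.mulVec_mulVec, Matrix.nonsing_inv_mul _ hu2, Matrix.one_mulVec] at h
      exact h
  refine ⟨U, ?_, hJM⟩
  rw [mul_eq_one_comm]
  have hL : ∀ x, ‖Matrix.toEuclideanLin U x‖ = ‖x‖ := fun x => hiso (WithLp.ofLp x)
  have hin := (LinearMap.norm_map_iff_inner_map_map (Matrix.toEuclideanLin U)).1 hL
  ext i j
  have h := hin (EuclideanSpace.single i 1) (EuclideanSpace.single j 1)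
  simp [EuclideanSpace.inner_eq_star_dotProduct, dotProduct, Matrix.toLpLin_apply] at h
  simp only [Matrix.mul_apply, Matrix.conjTranspose_apply, Matrix.one_apply]
  have h2 : (starRingEnd ℂ) ((Pi.single i 1 : Fin (n + 1) → ℂ) j) = if i = j then 1 else 0 := by
    by_cases hij : i = j
    · subst hij; simp
    · simp [hij, Pi.single_apply, Ne.symm hij]
  refine Eq.trans ?_ (h.trans h2)
  exact Finset.sum_congr rfl fun k _ => mul_comm _ _

theorem rlin_expand {n : ℕ} (L : (Fin (n + 1) → ℂ) →L[ℝ] ℂ) (w : Fin (n + 1) → ℂ) :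
    L w = ∑ m, (((w m).re : ℂ) * L (Pi.single m 1) + ((w m).im : ℂ) * L (Pi.single m I)) := by
  have h : w = ∑ m, ((w m).re • (Pi.single m 1 : Fin (n + 1) → ℂ) +
      (w m).im • (Pi.single m I : Fin (n + 1) → ℂ)) := by
    funext j
    simp [Finset.sum_apply, Pi.single_apply, Finset.sum_add_distrib, Complex.re_add_im]
  conv_lhs => rw [h]
  simp [map_sum, Complex.real_smul]

theorem wir_bar {n : ℕ} (L : (Fin (n + 1) → ℂ) →L[ℝ] ℂ) (w : Fin (n + 1) → ℂ) :
    (1 / 2) * (L w + I * L (I • w)) =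
      ∑ m, conj (w m) * ((1 / 2) * (L (Pi.single m 1) + I * L (Pi.single m I))) := by
  rw [rlin_expand L w, rlin_expand L (I • w), Finset.mul_sum, ← Finset.sum_add_distrib,
    Finset.mul_sum]
  refine Finset.sum_congr rfl fun m _ => ?_
  have h : conj (w m) = (w m).re - (w m).im * I := by
    apply Complex.ext <;> simp
  rw [h]
  simp
  ring_nf
  simp only [I_sq]
  ring

theorem wir_hol {n : ℕ} (L : (Fin (n + 1) → ℂ) →L[ℝ] ℂ) (w : Fin (n + 1) → ℂ) :
    (1 / 2) * (L w - I * L (I • w)) =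
      ∑ m, w m * ((1 / 2) * (L (Pi.single m 1) - I * L (Pi.single m I))) := by
  rw [rlin_expand L w, rlin_expand L (I • w), Finset.mul_sum, ← Finset.sum_sub_distrib,
    Finset.mul_sum]
  refine Finset.sum_congr rfl fun m _ => ?_
  have h : w m = (w m).re + (w m).im * I := (re_add_im _).symm
  rw [show w m * ((1 / 2) * (L (Pi.single m 1) - I * L (Pi.single m I))) =
    ((w m).re + (w m).im * I) * ((1 / 2) * (L (Pi.single m 1) - I * L (Pi.single m I))) by
      rw [← h]]
  simp [-re_add_im]
  ring_nf
  simp only [I_sq]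
  ring

theorem single_I {n : ℕ} (k : Fin (n + 1)) :
    (Pi.single k I : Fin (n + 1) → ℂ) = I • Pi.single k 1 := by
  rw [← Pi.single_smul]; simp

theorem fderiv_comp_real {n : ℕ} {g : (Fin (n + 1) → ℂ) → ℂ}
    {ψ : (Fin (n + 1) → ℂ) → (Fin (n + 1) → ℂ)} {z : Fin (n + 1) → ℂ}
    (hψ : DifferentiableAt ℂ ψ z) (hg : DifferentiableAt ℝ g (ψ z)) (v : Fin (n + 1) → ℂ) :
    fderiv ℝ (g ∘ ψ) z v = fderiv ℝ g (ψ z) (fderiv ℂ ψ z v) := by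
  have h := hg.hasFDerivAt.comp z (hψ.hasFDerivAt.restrictScalars ℝ)
  rw [h.fderiv]
  rfl

theorem wdzbar_comp {n : ℕ} {g : (Fin (n + 1) → ℂ) → ℂ}
    {ψ : (Fin (n + 1) → ℂ) → (Fin (n + 1) → ℂ)} {z : Fin (n + 1) → ℂ}
    (hψ : DifferentiableAt ℂ ψ z) (hg : DifferentiableAt ℝ g (ψ z)) (k : Fin (n + 1)) :
    wdzbar n k (g ∘ ψ) z =
      ∑ m, conj (fderiv ℂ ψ z (Pi.single k 1) m) * wdzbar n m g (ψ z) := by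
  simp only [wdzbar]
  rw [fderiv_comp_real hψ hg, fderiv_comp_real hψ hg, single_I, map_smul, wir_bar]

theorem wdz_comp {n : ℕ} {g : (Fin (n + 1) → ℂ) → ℂ}
    {ψ : (Fin (n + 1) → ℂ) → (Fin (n + 1) → ℂ)} {z : Fin (n + 1) → ℂ}
    (hψ : DifferentiableAt ℂ ψ z) (hg : DifferentiableAt ℝ g (ψ z)) (k : Fin (n + 1)) :
    wdz n k (g ∘ ψ) z =
      ∑ m, fderiv ℂ ψ z (Pi.single k 1) m * wdz n m g (ψ z) := by
  simp only [wdz]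
  rw [fderiv_comp_real hψ hg, fderiv_comp_real hψ hg, single_I, map_smul, wir_hol]

theorem wdz_congr {n : ℕ} {f g : (Fin (n + 1) → ℂ) → ℂ} {z : Fin (n + 1) → ℂ}
    (h : f =ᶠ[nhds z] g) (k : Fin (n + 1)) : wdz n k f z = wdz n k g z := by
  simp only [wdz, h.fderiv_eq]

theorem wdz_sum_mul {n : ℕ} {a b : Fin (n + 1) → (Fin (n + 1) → ℂ) → ℂ} {z : Fin (n + 1) → ℂ}
    (ha : ∀ m, DifferentiableAt ℝ (a m) z) (hb : ∀ m, DifferentiableAt ℝ (b m) z)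
    (k : Fin (n + 1)) :
    wdz n k (fun z => ∑ m, a m z * b m z) z =
      ∑ m, (wdz n k (a m) z * b m z + a m z * wdz n k (b m) z) := by
  have h : HasFDerivAt (fun z => ∑ m, a m z * b m z)
      (∑ m, (a m z • fderiv ℝ (b m) z + b m z • fderiv ℝ (a m) z)) z :=
    HasFDerivAt.fun_sum fun m _ => (ha m).hasFDerivAt.mul (hb m).hasFDerivAt
  simp only [wdz, h.fderiv, _root_.sum_apply, _root_.add_apply,
    _root_.smul_apply, smul_eq_mul]
  rw [Finset.mul_sum, ← Finset.sum_sub_distrib, Finset.mul_sum]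
  exact Finset.sum_congr rfl fun m _ => by ring

theorem conj_diff {n : ℕ} {f : (Fin (n + 1) → ℂ) → ℂ} {z : Fin (n + 1) → ℂ}
    (hf : DifferentiableAt ℂ f z) :
    HasFDerivAt (fun z => conj (f z))
      (Complex.conjCLE.toContinuousLinearMap.comp ((fderiv ℂ f z).restrictScalars ℝ)) z :=
  (Complex.conjCLE.toContinuousLinearMap.hasFDerivAt (x := f z)).comp z
    (hf.hasFDerivAt.restrictScalars ℝ)

theorem wdz_conj {n : ℕ} {f : (Fin (n + 1) → ℂ) → ℂ} {z : Fin (n + 1) → ℂ}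
    (hf : DifferentiableAt ℂ f z) (k : Fin (n + 1)) : wdz n k (fun z => conj (f z)) z = 0 := by
  simp only [wdz, (conj_diff hf).fderiv]
  rw [single_I]
  simp
  ring_nf
  simp

theorem snd_diff {n : ℕ} {g : (Fin (n + 1) → ℂ) → ℂ} {z : Fin (n + 1) → ℂ}
    (hg : ContDiffAt ℝ 2 g z) : DifferentiableAt ℝ (fderiv ℝ g) z :=
  (hg.fderiv_right (m := 1) (by norm_num)).differentiableAt (by norm_num)

theorem snd_apply {n : ℕ} {g : (Fin (n + 1) → ℂ) → ℂ} {z : Fin (n + 1) → ℂ}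
    (hg : ContDiffAt ℝ 2 g z) (v : Fin (n + 1) → ℂ) :
    HasFDerivAt (fun z => fderiv ℝ g z v)
      ((ContinuousLinearMap.apply ℝ ℂ v).comp (fderiv ℝ (fderiv ℝ g) z)) z :=
  ((ContinuousLinearMap.apply ℝ ℂ v).hasFDerivAt).comp z (snd_diff hg).hasFDerivAt

theorem wdzbar_has {n : ℕ} {g : (Fin (n + 1) → ℂ) → ℂ} {z : Fin (n + 1) → ℂ}
    (hg : ContDiffAt ℝ 2 g z) (k : Fin (n + 1)) :
    HasFDerivAt (wdzbar n k g) ((1 / 2 : ℂ) •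
      ((ContinuousLinearMap.apply ℝ ℂ (Pi.single k 1)).comp (fderiv ℝ (fderiv ℝ g) z) +
      I • (ContinuousLinearMap.apply ℝ ℂ (Pi.single k I)).comp (fderiv ℝ (fderiv ℝ g) z))) z :=
  ((snd_apply hg _).add ((snd_apply hg _).const_mul I)).const_mul (1 / 2)

theorem wdz_has {n : ℕ} {g : (Fin (n + 1) → ℂ) → ℂ} {z : Fin (n + 1) → ℂ}
    (hg : ContDiffAt ℝ 2 g z) (k : Fin (n + 1)) :
    HasFDerivAt (wdz n k g) ((1 / 2 : ℂ) •
      ((ContinuousLinearMap.apply ℝ ℂ (Pi.single k 1)).comp (fderiv ℝ (fderiv ℝ g) z) -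
      I • (ContinuousLinearMap.apply ℝ ℂ (Pi.single k I)).comp (fderiv ℝ (fderiv ℝ g) z))) z :=
  ((snd_apply hg _).sub ((snd_apply hg _).const_mul I)).const_mul (1 / 2)

theorem wdz_comm {n : ℕ} {g : (Fin (n + 1) → ℂ) → ℂ} {z : Fin (n + 1) → ℂ}
    (hg : ContDiffAt ℝ 2 g z) (j k : Fin (n + 1)) :
    wdzbar n j (wdz n k g) z = wdz n k (wdzbar n j g) z := by
  have hs : IsSymmSndFDerivAt ℝ g z := hg.isSymmSndFDerivAt (by simp)
  have e : ∀ v w, fderiv ℝ (fderiv ℝ g) z v w = fderiv ℝ (fderiv ℝ g) z w v := fun v w => hs v w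
  rw [wdzbar, wdz, (wdz_has hg k).fderiv, (wdzbar_has hg j).fderiv]
  simp
  rw [e (Pi.single j 1) (Pi.single k 1), e (Pi.single j 1) (Pi.single k I),
    e (Pi.single j I) (Pi.single k 1), e (Pi.single j I) (Pi.single k I)]
  ring

theorem hol_contDiffOn {m : ℕ} {U : Set (Fin m → ℂ)} (hU : IsOpen U) (N : ℕ) :
    ∀ f : (Fin m → ℂ) → ℂ, DifferentiableOn ℂ f U → ContDiffOn ℂ N f U := by
  induction N with
  | zero =>
    intro f hf
    exact contDiffOn_zero.2 hf.continuousOn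
  | succ N ih =>
    intro f hf
    rw [Nat.cast_succ, contDiffOn_succ_iff_fderiv_of_isOpen hU]
    refine ⟨hf, by simp, ?_⟩
    rw [contDiffOn_clm_apply]
    intro v
    exact ih _ fun z hz => (smooth_aux hU hf v hz).differentiableWithinAt

/-- complex Hessian -/
def hess (n : ℕ) (g : (Fin (n + 1) → ℂ) → ℂ) (z : Fin (n + 1) → ℂ) :
    Matrix (Fin (n + 1)) (Fin (n + 1)) ℂ :=
  Matrix.of fun j k => wdz n j (wdzbar n k g) z

theorem hess_comp {n : ℕ} {ψ : (Fin (n + 1) → ℂ) → (Fin (n + 1) → ℂ)}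
    (hψd : DifferentiableOn ℂ ψ (TB n)) (hm : MapsTo ψ (TB n) (TB n))
    {g : (Fin (n + 1) → ℂ) → ℂ} (hg : ContDiffOn ℝ 2 g (TB n)) {p} (hp : p ∈ TB n) :
    hess n (g ∘ ψ) p = (LinearMap.toMatrix' (fderiv ℂ ψ p).toLinearMap).transpose *
      hess n g (ψ p) * (LinearMap.toMatrix' (fderiv ℂ ψ p).toLinearMap).map conj := by
  have hO := TB_isOpen n
  have hgd : ∀ z ∈ TB n, ContDiffAt ℝ 2 g z := fun z hz => hg.contDiffAt (hO.mem_nhds hz)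
  have hψa : ∀ z ∈ TB n, DifferentiableAt ℂ ψ z :=
    fun z hz => hψd.differentiableAt (hO.mem_nhds hz)
  ext j k
  have h1 : wdzbar n k (g ∘ ψ) =ᶠ[nhds p] fun z =>
      ∑ m, conj (fderiv ℂ ψ z (Pi.single k 1) m) * (wdzbar n m g ∘ ψ) z := by
    filter_upwards [hO.mem_nhds hp] with z hz
    exact wdzbar_comp (hψa z hz) ((hgd _ (hm hz)).differentiableAt (by norm_num)) k
  have hJd : ∀ m, DifferentiableAt ℂ (fun z => fderiv ℂ ψ z (Pi.single k 1) m) p := by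
    intro m
    have h := smooth_aux hO (f := fun z => ψ z m)
      (fun z hz => ((differentiableAt_pi.1 (hψa z hz)) m).differentiableWithinAt)
      (Pi.single k 1) hp
    refine h.congr_of_eventuallyEq ?_
    filter_upwards [hO.mem_nhds hp] with z hz
    have := (hasFDerivAt_pi'.1 (hψa z hz).hasFDerivAt) m
    rw [this.fderiv]
    rfl
  have hbd : ∀ m, DifferentiableAt ℝ (wdzbar n m g) (ψ p) :=
    fun m => (wdzbar_has (hgd _ (hm hp)) m).differentiableAt
  have hJ : ∀ l k, LinearMap.toMatrix' (fderiv ℂ ψ p).toLinearMap l k =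
      fderiv ℂ ψ p (Pi.single k 1) l := by
    intro l k
    simp [LinearMap.toMatrix'_apply]
  rw [hess, Matrix.of_apply, wdz_congr h1, wdz_sum_mul
    (fun m => (conj_diff (hJd m)).differentiableAt)
    (fun m => (hbd m).comp p ((hψa p hp).restrictScalars ℝ))]
  simp only [wdz_conj (hJd _), zero_mul, zero_add, wdz_comp (hψa p hp) (hbd _)]
  simp only [Matrix.mul_apply, Matrix.transpose_apply, Matrix.map_apply, hJ, hess, Matrix.of_apply]
  refine Finset.sum_congr rfl fun m _ => ?_
  rw [mul_comm]

theorem invLap_eq {n : ℕ} {g : (Fin (n + 1) → ℂ) → ℂ} {z : Fin (n + 1) → ℂ} (hz : z ∈ TB n)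
    (hg : ContDiffAt ℝ 2 g z) :
    invLap n g z = 4 * ((frM n z).transpose * hess n g z * (frM n z).map conj).trace := by
  have hr := rho_pos hz
  have hs : (Real.sqrt (2 * rho n z) : ℂ) ^ 2 = 2 * (rho n z : ℂ) := by
    have := Real.sq_sqrt (show 0 ≤ 2 * rho n z by linarith)
    exact_mod_cast this
  have hy : (((z (Fin.last n)).im + ∑ j : Fin n, (z j.castSucc).im ^ 2 : ℝ) : ℂ) =
      (rho n z : ℂ) + 2 * ∑ j : Fin n, ((z j.castSucc).im : ℂ) ^ 2 := by
    simp [rho]; ring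
  rw [invLap, hy]
  simp only [wdz_comm hg]
  have hH : ∀ j k, wdz n j (wdzbar n k g) z = hess n g z j k := fun j k => rfl
  simp only [hH]
  generalize hess n g z = H
  simp only [Matrix.trace, Matrix.diag_apply, Matrix.mul_apply, Matrix.transpose_apply,
    Matrix.map_apply, Fin.sum_univ_castSucc, frM_ll, frM_lc, frM_cl, frM_cc]
  simp only [apply_ite conj, map_zero, map_mul, conj_ofReal, map_ofNat, ite_mul, mul_ite, zero_mul,
    mul_zero, Finset.sum_ite_eq, Finset.sum_ite_eq', Finset.mem_univ, if_true, Finset.sum_const_zero,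
    zero_add]
  set s := (Real.sqrt (2 * rho n z) : ℂ)
  have e : ∀ k : Fin n, (s * H k.castSucc k.castSucc + 2 * s * ((z k.castSucc).im : ℂ) *
        H (Fin.last n) k.castSucc) * s + (s * H k.castSucc (Fin.last n) +
        2 * s * ((z k.castSucc).im : ℂ) * H (Fin.last n) (Fin.last n)) *
        (2 * s * ((z k.castSucc).im : ℂ)) =
      2 * (rho n z : ℂ) * (H k.castSucc k.castSucc +
        2 * ((z k.castSucc).im : ℂ) * H (Fin.last n) k.castSucc +
        2 * ((z k.castSucc).im : ℂ) * H k.castSucc (Fin.last n) +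
        4 * H (Fin.last n) (Fin.last n) * ((z k.castSucc).im : ℂ) ^ 2) := by
    intro k
    rw [← hs]; ring
  simp only [e, ← Finset.mul_sum, Finset.sum_add_distrib]
  ring

theorem stmt15 (n : ℕ) (ψ φ : (Fin (n + 1) → ℂ) → (Fin (n + 1) → ℂ))
    (hψd : DifferentiableOn ℂ ψ (TB n)) (hφd : DifferentiableOn ℂ φ (TB n))
    (hbij : Set.BijOn ψ (TB n) (TB n)) (hinv : ∀ z ∈ TB n, φ (ψ z) = z)
    (g : (Fin (n + 1) → ℂ) → ℂ) (hg : ContDiffOn ℝ 2 g (TB n)) :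
    ∀ z ∈ TB n, invLap n (g ∘ ψ) z = invLap n g (ψ z) := by
  intro z hz
  have hO := TB_isOpen n
  have hgψ : ContDiffAt ℝ 2 (g ∘ ψ) z := by
    have h1 : ContDiffOn ℂ (2 : ℕ) ψ (TB n) := contDiffOn_pi.2 fun m =>
      hol_contDiffOn hO 2 _ fun w hw => (differentiableWithinAt_pi.1 (hψd w hw)) m
    have h2 : ContDiffAt ℝ 2 ψ z := (h1.contDiffAt (hO.mem_nhds hz)).restrict_scalars ℝ
    exact (hg.contDiffAt (hO.mem_nhds (hbij.mapsTo hz))).comp z h2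
  obtain ⟨U, hU, hJ⟩ := unitary_part hψd hφd hbij hinv hz
  have hq : ψ z ∈ TB n := hbij.mapsTo hz
  rw [invLap_eq hz hgψ, invLap_eq hq (hg.contDiffAt (hO.mem_nhds hq)),
    hess_comp hψd hbij.mapsTo hg hz]
  set J := LinearMap.toMatrix' (fderiv ℂ ψ z).toLinearMap
  have h1 : (frM n z).transpose * (J.transpose * hess n g (ψ z) * J.map conj) * (frM n z).map conj
      = (J * frM n z).transpose * hess n g (ψ z) * (J * frM n z).map conj := by
    rw [Matrix.map_mul, Matrix.transpose_mul]
    simp only [Matrix.mul_assoc]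
  have h2 : U.map conj * U.transpose = 1 := by
    have := congrArg Matrix.transpose hU
    rw [Matrix.transpose_mul, Matrix.transpose_one] at this
    exact this
  rw [h1, hJ, Matrix.map_mul, Matrix.transpose_mul]
  congr 1
  rw [Matrix.mul_assoc, Matrix.mul_assoc, Matrix.trace_mul_comm]
  simp only [Matrix.mul_assoc]
  rw [h2, Matrix.mul_one]
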